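/- Fix a smooth function χ : ℝ → ℝ with 0 ≤ χ ≤ 1/2 everywhere, χ(r) = 1/2 for r ≤ 100, and χ(r) = 0 for r ≥ 1000. For ε > 0 define f_ε(q₁,q₂,ξ) = q₁cos ξ + q₂sin ξ − ε·χ(q₁²+q₂²)·cos 2ξ. Then there exists ε₀ > 0 such that for every ε ∈ (0, ε₀]: (i) 0 is a regular value of ∂f_ε/∂ξ, i.e. the total gradient (in (q₁,q₂,ξ)) of ∂f_ε/∂ξ is nonzero at every point where ∂f_ε/∂ξ = 0; (ii) f_ε generates an embedded Lagrangian: if ∂f_ε/∂ξ(q,ξ) = ∂f_ε/∂ξ(q,ξ′) = 0 and ∂f_ε/∂q(q,ξ) = ∂f_ε/∂q(q,ξ′), then ξ − ξ′ ∈ 2πℤ; and (iii) at every (q,ξ) with q₁² + q₂² > 100 and ∂f_ε/∂ξ(q,ξ) = 0 one has ∂²f_ε/∂ξ²(q,ξ) ≠ 0. -/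

import Mathlib

/-! Write `r = q₁² + q₂²` and `g = ∂f_ε/∂ξ = -q₁ sin ξ + q₂ cos ξ + 2εχ(r) sin 2ξ`. Since `χ` is
smooth and vanishes for large `r`, there is `M` with `|χ'(r)| ≤ M` and `|χ'(r) qᵢ| ≤ 32 M` for all `q`; it
suffices that `ε (1000 (M + 1)) ≤ 1`.

* Regularity: differentiating `g` along the horizontal unit vector `(-sin ξ, cos ξ)` gives
  `1 + 4εχ' sin 2ξ (-q₁ sin ξ + q₂ cos ξ)`, and on `g = 0` this equals `1 - 8ε²χχ' sin² 2ξ > 0`.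
* Injectivity: equality of the first components of `∂f_ε/∂q` reads
  `cos ξ - cos ξ' = 2εχ'q₁ (cos 2ξ - cos 2ξ') = 4εχ'q₁ (cos ξ + cos ξ') (cos ξ - cos ξ')`, and the
  factor in front of the difference is less than `1`, so `cos ξ = cos ξ'`. Then `cos 2ξ = cos 2ξ'`
  and the second components give `sin ξ = sin ξ'`.
* Nondegeneracy: `-q₁ sin ξ + q₂ cos ξ` and `q₁ cos ξ + q₂ sin ξ` have squares summing to `r`; if
  `g` and `∂g/∂ξ` both vanish, these are `O(ε)`, hence `r ≤ 5ε²`, contradicting `r > 100`. -/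

open Real Set

noncomputable section

/-- The fiberwise derivative `∂f/∂ξ` of a family `f(q,ξ)` with fiber variable `ξ`. -/
def dxi (f : (ℝ × ℝ) × ℝ → ℝ) : (ℝ × ℝ) × ℝ → ℝ :=
  fun p => deriv (fun s => f (p.1, s)) p.2

/-- The perturbed Lagrangian collapse family
`f_ε(q₁,q₂,ξ) = q₁cos ξ + q₂sin ξ − ε·χ(q₁²+q₂²)·cos 2ξ`. -/
def fPert (χ : ℝ → ℝ) (ε : ℝ) : (ℝ × ℝ) × ℝ → ℝ :=
  fun p => p.1.1 * Real.cos p.2 + p.1.2 * Real.sin p.2 -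
    ε * χ (p.1.1 ^ 2 + p.1.2 ^ 2) * Real.cos (2 * p.2)

theorem dxi_fPert (χ : ℝ → ℝ) (ε : ℝ) :
    dxi (fPert χ ε) = fun p => -p.1.1 * Real.sin p.2 + p.1.2 * Real.cos p.2 +
      2 * ε * χ (p.1.1 ^ 2 + p.1.2 ^ 2) * Real.sin (2 * p.2) := by
  funext p
  have h2 : HasDerivAt (fun s : ℝ => 2 * s) 2 p.2 := by
    simpa using (hasDerivAt_id p.2).const_mul 2
  have h := (((Real.hasDerivAt_cos p.2).const_mul p.1.1).add
    ((Real.hasDerivAt_sin p.2).const_mul p.1.2)).sub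
    (h2.cos.const_mul (ε * χ (p.1.1 ^ 2 + p.1.2 ^ 2)))
  refine Eq.trans (HasDerivAt.deriv h) ?_
  ring

theorem dxi_dxi_fPert (χ : ℝ → ℝ) (ε : ℝ) (p : (ℝ × ℝ) × ℝ) :
    dxi (dxi (fPert χ ε)) p = -p.1.1 * Real.cos p.2 - p.1.2 * Real.sin p.2 +
      4 * ε * χ (p.1.1 ^ 2 + p.1.2 ^ 2) * Real.cos (2 * p.2) := by
  rw [dxi_fPert]
  have h2 : HasDerivAt (fun s : ℝ => 2 * s) 2 p.2 := by
    simpa using (hasDerivAt_id p.2).const_mul 2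
  have h := (((Real.hasDerivAt_sin p.2).const_mul (-p.1.1)).add
    ((Real.hasDerivAt_cos p.2).const_mul p.1.2)).add
    (h2.sin.const_mul (2 * ε * χ (p.1.1 ^ 2 + p.1.2 ^ 2)))
  refine Eq.trans (HasDerivAt.deriv h) ?_
  ring

theorem hasDerivAt_line (a c : ℝ) : HasDerivAt (fun t : ℝ => a + t * c) c 0 := by
  simpa using ((hasDerivAt_id (0 : ℝ)).mul_const c).const_add a

theorem hasDerivAt_cutoff_line {χ : ℝ → ℝ} (hχ : Differentiable ℝ χ) (q : ℝ × ℝ) (c d : ℝ) :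
    HasDerivAt (fun t : ℝ => χ ((q.1 + t * c) ^ 2 + (q.2 + t * d) ^ 2))
      (deriv χ (q.1 ^ 2 + q.2 ^ 2) * (2 * q.1 * c + 2 * q.2 * d)) 0 := by
  have h1 := ((hasDerivAt_line q.1 c).pow 2).add ((hasDerivAt_line q.2 d).pow 2)
  have h2 : HasDerivAt χ (deriv χ (q.1 ^ 2 + q.2 ^ 2))
      ((q.1 + 0 * c) ^ 2 + (q.2 + 0 * d) ^ 2) := by
    simpa using (hχ (q.1 ^ 2 + q.2 ^ 2)).hasDerivAt
  exact (HasDerivAt.comp (0 : ℝ) h2 h1).congr_deriv (by simp)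

/-- The directional derivative of `∂f_ε/∂ξ` along a horizontal vector `(c, d)`. -/
theorem fderiv_dxi_fPert_apply {χ : ℝ → ℝ} (hχ : Differentiable ℝ χ) (ε : ℝ)
    (p : (ℝ × ℝ) × ℝ) (c d : ℝ) :
    fderiv ℝ (dxi (fPert χ ε)) p ((c, d), 0) = -c * Real.sin p.2 + d * Real.cos p.2 +
      2 * ε * (deriv χ (p.1.1 ^ 2 + p.1.2 ^ 2) * (2 * p.1.1 * c + 2 * p.1.2 * d)) *
        Real.sin (2 * p.2) := by
  have hd : DifferentiableAt ℝ (dxi (fPert χ ε)) p := by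
    rw [dxi_fPert]; fun_prop
  have hl : HasDerivAt (fun t : ℝ => (((p.1.1 + t * c, p.1.2 + t * d), p.2) : (ℝ × ℝ) × ℝ))
      ((c, d), 0) 0 :=
    ((hasDerivAt_line _ _).prodMk (hasDerivAt_line _ _)).prodMk (hasDerivAt_const _ _)
  have h1 := HasFDerivAt.comp_hasDerivAt_of_eq (0 : ℝ) hd.hasFDerivAt hl (by simp)
  have h2 := (((hasDerivAt_line p.1.1 c).neg.mul_const (Real.sin p.2)).add
    ((hasDerivAt_line p.1.2 d).mul_const (Real.cos p.2))).add
    (((hasDerivAt_cutoff_line hχ p.1 c d).const_mul (2 * ε)).mul_const (Real.sin (2 * p.2)))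
  rw [dxi_fPert] at h1 ⊢
  exact h1.unique h2

/-- The directional derivative of `f_ε(·, ξ)` along `(c, d)`. -/
theorem fderiv_fPert_apply {χ : ℝ → ℝ} (hχ : Differentiable ℝ χ) (ε ξ : ℝ)
    (q : ℝ × ℝ) (c d : ℝ) :
    fderiv ℝ (fun y => fPert χ ε (y, ξ)) q (c, d) = c * Real.cos ξ + d * Real.sin ξ -
      ε * (deriv χ (q.1 ^ 2 + q.2 ^ 2) * (2 * q.1 * c + 2 * q.2 * d)) * Real.cos (2 * ξ) := by
  have hd : DifferentiableAt ℝ (fun y => fPert χ ε (y, ξ)) q := by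
    unfold fPert; fun_prop
  have hl : HasDerivAt (fun t : ℝ => ((q.1 + t * c, q.2 + t * d) : ℝ × ℝ)) (c, d) 0 :=
    (hasDerivAt_line _ _).prodMk (hasDerivAt_line _ _)
  have h1 := HasFDerivAt.comp_hasDerivAt_of_eq (0 : ℝ) hd.hasFDerivAt hl (by simp)
  have h2 := (((hasDerivAt_line q.1 c).mul_const (Real.cos ξ)).add
    ((hasDerivAt_line q.2 d).mul_const (Real.sin ξ))).sub
    (((hasDerivAt_cutoff_line hχ q c d).const_mul ε).mul_const (Real.cos (2 * ξ)))
  exact h1.unique h2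

/-- Since `χ' = 0` beyond `1000` and `|qᵢ| ≤ √1000 < 32` where `q₁² + q₂² ≤ 1000`, both `χ'` and
`χ' qᵢ` are bounded along `r = q₁² + q₂²`. -/
theorem exists_bound {χ : ℝ → ℝ} (hχsm : ContDiff ℝ (⊤ : ℕ∞) χ)
    (hχhi : ∀ r, (1000 : ℝ) ≤ r → χ r = 0) :
    ∃ M : ℝ, 0 ≤ M ∧ ∀ a b : ℝ, |deriv χ (a ^ 2 + b ^ 2)| ≤ M ∧
      |deriv χ (a ^ 2 + b ^ 2) * a| ≤ 32 * M := by
  have hc : Continuous (deriv χ) := hχsm.continuous_deriv (by simp)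
  obtain ⟨M, hM⟩ := (isCompact_Icc (a := (0 : ℝ)) (b := 1000)).exists_bound_of_continuousOn
    hc.continuousOn
  have hM0 : 0 ≤ M := (norm_nonneg _).trans (hM 0 (by norm_num))
  refine ⟨M, hM0, fun a b => ?_⟩
  by_cases h : a ^ 2 + b ^ 2 ≤ 1000
  · have h1 : |deriv χ (a ^ 2 + b ^ 2)| ≤ M := hM _ ⟨by positivity, h⟩
    refine ⟨h1, ?_⟩
    have h2 : |a| ≤ 32 := abs_le.mpr (abs_le_of_sq_le_sq' (by nlinarith [sq_nonneg b]) (by norm_num))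
    rw [abs_mul, mul_comm 32 M]
    exact mul_le_mul h1 h2 (abs_nonneg _) hM0
  · have h0 : deriv χ (a ^ 2 + b ^ 2) = 0 := by
      have he : χ =ᶠ[nhds (a ^ 2 + b ^ 2)] fun _ => (0 : ℝ) := by
        filter_upwards [lt_mem_nhds (not_le.mp h)] with r hr using hχhi r hr.le
      rw [he.deriv_eq, deriv_const]
    simp [h0, hM0]

/-- For all sufficiently small `ε > 0`, the perturbed collapse family `f_ε` is a
generating function generating an embedded Lagrangian (modulo the `2π`-periodicity
in `ξ`), and its fiberwise second derivative is nonzero on the fiber-critical locus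
over `{q₁² + q₂² > 100}`. -/
theorem perturbed_collapse_generates_embedded
    (χ : ℝ → ℝ) (hχsm : ContDiff ℝ (⊤ : ℕ∞) χ)
    (hχ01 : ∀ r, 0 ≤ χ r ∧ χ r ≤ 1 / 2)
    (hχlo : ∀ r ≤ (100 : ℝ), χ r = 1 / 2)
    (hχhi : ∀ r, (1000 : ℝ) ≤ r → χ r = 0) :
    ∃ ε₀ > 0, ∀ ε : ℝ, 0 < ε → ε ≤ ε₀ →
      (∀ p, dxi (fPert χ ε) p = 0 → fderiv ℝ (dxi (fPert χ ε)) p ≠ 0) ∧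
      (∀ q : ℝ × ℝ, ∀ ξ ξ' : ℝ, dxi (fPert χ ε) (q, ξ) = 0 →
        dxi (fPert χ ε) (q, ξ') = 0 →
        fderiv ℝ (fun y => fPert χ ε (y, ξ)) q =
          fderiv ℝ (fun y => fPert χ ε (y, ξ')) q →
        ∃ k : ℤ, ξ - ξ' = 2 * π * (k : ℝ)) ∧
      (∀ q : ℝ × ℝ, ∀ ξ : ℝ, 100 < q.1 ^ 2 + q.2 ^ 2 →
        dxi (fPert χ ε) (q, ξ) = 0 → dxi (dxi (fPert χ ε)) (q, ξ) ≠ 0) := by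
  have hχ : Differentiable ℝ χ := hχsm.differentiable (by simp)
  obtain ⟨M, hM0, hM⟩ := exists_bound hχsm hχhi
  refine ⟨1 / (1000 * (M + 1)), by positivity, fun ε hε hε₀ => ?_⟩
  have hεM : ε * (1000 * (M + 1)) ≤ 1 := (le_div_iff₀ (by positivity)).mp hε₀
  have hε1 : ε ≤ 1 := by nlinarith [mul_nonneg hε.le hM0]
  have hεM' : ε * M ≤ 1 / 1000 := by nlinarith
  refine ⟨fun p hp hz => ?_, fun q ξ ξ' _ _ hq => ?_, fun q ξ hr hp hz => ?_⟩
  · have h := fderiv_dxi_fPert_apply hχ ε p (-Real.sin p.2) (Real.cos p.2)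
    rw [hz] at h
    rw [dxi_fPert] at hp
    simp only [zero_apply] at h hp
    obtain ⟨hM1, -⟩ := hM p.1.1 p.1.2
    obtain ⟨hx0, hx1⟩ := hχ01 (p.1.1 ^ 2 + p.1.2 ^ 2)
    generalize deriv χ (p.1.1 ^ 2 + p.1.2 ^ 2) = D at *
    generalize χ (p.1.1 ^ 2 + p.1.2 ^ 2) = X at *
    have hS : Real.sin (2 * p.2) ^ 2 ≤ 1 := Real.sin_sq_le_one _
    generalize Real.sin (2 * p.2) = S at *
    have key : 8 * (ε * D) * (ε * X * S ^ 2) = 1 := by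
      linear_combination h + 4 * ε * D * S * hp + Real.sin_sq_add_cos_sq p.2
    have h1 : |ε * D| ≤ 1 / 1000 := by
      rw [abs_mul, abs_of_pos hε]
      exact (mul_le_mul_of_nonneg_left hM1 hε.le).trans hεM'
    have h2 : ε * X * S ^ 2 ≤ 1 := by
      have : ε * X ≤ 1 := by nlinarith
      exact mul_le_one₀ this (sq_nonneg _) hS
    have h3 : 0 ≤ ε * X * S ^ 2 := by positivity
    nlinarith [(abs_le.mp h1).2]
  · have e1 := congrArg (fun L : ℝ × ℝ →L[ℝ] ℝ => L (1, 0)) hq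
    have e2 := congrArg (fun L : ℝ × ℝ →L[ℝ] ℝ => L (0, 1)) hq
    simp only [fderiv_fPert_apply hχ] at e1 e2
    obtain ⟨-, hMa⟩ := hM q.1 q.2
    generalize deriv χ (q.1 ^ 2 + q.2 ^ 2) = D at *
    rw [Real.cos_two_mul, Real.cos_two_mul] at e1 e2
    have hc : Real.cos ξ = Real.cos ξ' := by
      have key : (Real.cos ξ - Real.cos ξ') *
          (1 - 4 * (ε * (D * q.1)) * (Real.cos ξ + Real.cos ξ')) = 0 := by
        linear_combination e1
      rcases mul_eq_zero.mp key with h | h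
      · linarith
      · exfalso
        have h1 : |ε * (D * q.1)| ≤ 32 / 1000 := by
          rw [abs_mul, abs_of_pos hε]
          nlinarith [mul_le_mul_of_nonneg_left hMa hε.le]
        have h2 : |Real.cos ξ + Real.cos ξ'| ≤ 2 :=
          (abs_add_le _ _).trans (by linarith [Real.abs_cos_le_one ξ, Real.abs_cos_le_one ξ'])
        have h3 := mul_le_mul h1 h2 (abs_nonneg _) (by norm_num)
        rw [← abs_mul] at h3
        linarith [(abs_le.mp h3).2]
    have hs : Real.sin ξ = Real.sin ξ' := by
      rw [hc] at e2
      linear_combination e2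
    obtain ⟨k, hk⟩ := Real.Angle.angle_eq_iff_two_pi_dvd_sub.mp (Real.Angle.cos_sin_inj hc hs)
    exact ⟨k, hk⟩
  · rw [dxi_dxi_fPert] at hz
    rw [dxi_fPert] at hp
    simp only at hp hz
    obtain ⟨hx0, hx1⟩ := hχ01 (q.1 ^ 2 + q.2 ^ 2)
    generalize χ (q.1 ^ 2 + q.2 ^ 2) = X at *
    have h1 : -q.1 * Real.sin ξ + q.2 * Real.cos ξ = -(2 * (ε * X) * Real.sin (2 * ξ)) := by
      linear_combination hp
    have h2 : q.1 * Real.cos ξ + q.2 * Real.sin ξ = 4 * (ε * X) * Real.cos (2 * ξ) := by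
      linear_combination -hz
    have h3 : q.1 ^ 2 + q.2 ^ 2 =
        (ε * X) ^ 2 * (4 * Real.sin (2 * ξ) ^ 2 + 16 * Real.cos (2 * ξ) ^ 2) := by
      calc q.1 ^ 2 + q.2 ^ 2 = (-q.1 * Real.sin ξ + q.2 * Real.cos ξ) ^ 2 +
            (q.1 * Real.cos ξ + q.2 * Real.sin ξ) ^ 2 := by
            linear_combination -(q.1 ^ 2 + q.2 ^ 2) * Real.sin_sq_add_cos_sq ξ
        _ = _ := by rw [h1, h2]; ring
    have h4 : (ε * X) ^ 2 ≤ 1 := pow_le_one₀ (by positivity) (by nlinarith)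
    have h5 : 4 * Real.sin (2 * ξ) ^ 2 + 16 * Real.cos (2 * ξ) ^ 2 ≤ 20 := by
      linarith [Real.sin_sq_le_one (2 * ξ), Real.cos_sq_le_one (2 * ξ)]
    have h6 := mul_le_mul h4 h5 (by positivity) zero_le_one
    linarith
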